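/- Let G be a finite simple graph with δ(G) ≥ α̃(G), and let P be a path of maximum length in G (no path in G has more vertices than P) with at least 3 vertices. Then the induced subgraph of G on the vertex set of P is Hamiltonian. -/

import Mathlib

def SimpleGraph.HasBipartiteHole {V : Type*} (G : SimpleGraph V) (s t : ℕ) : Prop :=
  ∃ S T : Finset V, Disjoint S T ∧ S.card = s ∧ T.card = t ∧
    ∀ a ∈ S, ∀ b ∈ T, ¬ G.Adj a b

noncomputable def SimpleGraph.biHoleNumber {V : Type*} (G : SimpleGraph V) : ℕ :=
  sInf {r : ℕ | ∃ s t : ℕ, 0 < s ∧ 0 < t ∧ r = s + t - 1 ∧ ¬ G.HasBipartiteHole s t}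

/-!
Let `P = v₀ … vₗ` be the path, `H` the subgraph induced on its vertices, and `s + t - 1 = α̃(G)`
where `G` has no `(s, t)`-bipartite-hole. Since `P` cannot be extended, its ends keep their full
degree in `H`, so each has at least `s + t - 1` neighbors on `P`. If `H` has no Hamilton cycle, then
no Hamiltonian path of `H` has adjacent ends. Suppose `v₀ ∼ vᵢ₊₁` and `vₗ ∼ vⱼ`. Rearranging `P`
along these two edges shows that `vᵢ ≁ vⱼ₊₁` if `i < j`, and `vⱼ₊₁ ≁ vᵢ₊₂` if `j ≤ i`.
Now let `k` be the `s`-th smallest such `j`, so that at least `t` of the `j` satisfy `k ≤ j`.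
Either `t` of the `i` satisfy `k ≤ i`, or `s` of them satisfy `i < k`; in both cases one of the two
relations gives an `(s, t)`-bipartite-hole.
-/

open SimpleGraph
open scoped Finset

section BipartiteHoles

variable {V : Type*} {G : SimpleGraph V}

lemma exists_biHoleNumber_eq_and_not_hasBipartiteHole [Finite V] (G : SimpleGraph V) :
    ∃ s t : ℕ, 0 < s ∧ 0 < t ∧ G.biHoleNumber = s + t - 1 ∧ ¬ G.HasBipartiteHole s t := by
  have := Fintype.ofFinite V
  refine Nat.sInf_mem
    (s := {r : ℕ | ∃ s t : ℕ, 0 < s ∧ 0 < t ∧ r = s + t - 1 ∧ ¬ G.HasBipartiteHole s t})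
    ⟨_, Fintype.card V + 1, 1, by omega, by omega, rfl, ?_⟩
  rintro ⟨S, -, -, hS, -⟩
  exact absurd S.card_le_univ (by omega)

lemma hasBipartiteHole_of_embedding {W : Type*} {H : SimpleGraph W} (f : H ↪g G) {s t : ℕ}
    (hH : H.HasBipartiteHole s t) : G.HasBipartiteHole s t := by
  obtain ⟨S, T, hST, rfl, rfl, hadj⟩ := hH
  refine ⟨S.map f.toEmbedding, T.map f.toEmbedding, (Finset.disjoint_map _).2 hST,
    S.card_map _, T.card_map _, ?_⟩
  simpa using hadj

lemma hasBipartiteHole_card_of_getVert_add {a b : V} {P : G.Walk a b} (hP : P.IsPath)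
    {I J : Finset ℕ} {m n : ℕ} (hI : ∀ i ∈ I, i + m ≤ P.length) (hJ : ∀ j ∈ J, j + n ≤ P.length)
    (hne : ∀ i ∈ I, ∀ j ∈ J, i + m ≠ j + n)
    (hadj : ∀ i ∈ I, ∀ j ∈ J, ¬ G.Adj (P.getVert (i + m)) (P.getVert (j + n))) :
    G.HasBipartiteHole #I #J := by
  classical
  refine ⟨I.image fun i ↦ P.getVert (i + m), J.image fun j ↦ P.getVert (j + n), ?_,
    Finset.card_image_of_injOn fun i hi i' hi' h ↦ ?_,
    Finset.card_image_of_injOn fun j hj j' hj' h ↦ ?_, by simpa using hadj⟩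
  · simp only [Finset.disjoint_left, Finset.mem_image, not_exists, not_and]
    rintro _ ⟨i, hi, rfl⟩ j hj h
    exact hne i hi j hj (hP.getVert_injOn (hI i hi) (hJ j hj) h.symm)
  · exact Nat.add_right_cancel (hP.getVert_injOn (hI i hi) (hI i' hi') h)
  · exact Nat.add_right_cancel (hP.getVert_injOn (hJ j hj) (hJ j' hj') h)

end BipartiteHoles

section Threshold

variable {α : Type*} [LinearOrder α]

lemma exists_card_filter_lt_lt_and_le_card_filter_le {s : ℕ} (hs : 0 < s) {X : Finset α}
    (hX : s ≤ #X) : ∃ k, #{x ∈ X | x < k} < s ∧ s ≤ #{x ∈ X | x ≤ k} := by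
  let e := X.orderEmbOfFin rfl
  let r : Fin #X := ⟨s - 1, by omega⟩
  have hfilter (p : α → Prop) [DecidablePred p] : #{x ∈ X | p x} = #{i | p (e i)} := by
    conv_lhs => rw [← X.map_orderEmbOfFin_univ rfl, Finset.filter_map, Finset.card_map]
    rfl
  refine ⟨e r, ?_, ?_⟩
  · simp only [hfilter, e.lt_iff_lt, Finset.filter_gt_eq_Iio, Fin.card_Iio, r]
    omega
  · simp only [hfilter, e.le_iff_le, Finset.filter_ge_eq_Iic, Fin.card_Iic, r]
    omega

lemma exists_subset_card_eq_le_or_lt {s t : ℕ} (hs : 0 < s) (ht : 0 < t) {X Y : Finset α}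
    (hX : s + t - 1 ≤ #X) (hY : s + t - 1 ≤ #Y) :
    ∃ A ⊆ X, ∃ B ⊆ Y, (#A = s ∧ #B = t ∧ ∀ a ∈ A, ∀ b ∈ B, a ≤ b) ∨
      (#B = s ∧ #A = t ∧ ∀ b ∈ B, ∀ a ∈ A, b < a) := by
  obtain ⟨k, hlt, hle⟩ := exists_card_filter_lt_lt_and_le_card_filter_le hs (X := X) (by omega)
  have hXk := X.card_filter_add_card_filter_not (· < k)
  have hYk := Y.card_filter_add_card_filter_not (· < k)
  simp only [not_lt] at hXk hYk
  by_cases hYt : t ≤ #{y ∈ Y | k ≤ y}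
  · obtain ⟨A, hA, hAs⟩ := Finset.exists_subset_card_eq hle
    obtain ⟨B, hB, hBt⟩ := Finset.exists_subset_card_eq hYt
    exact ⟨A, hA.trans (X.filter_subset _), B, hB.trans (Y.filter_subset _),
      .inl ⟨hAs, hBt, fun a ha b hb ↦
        (Finset.mem_filter.1 (hA ha)).2.trans (Finset.mem_filter.1 (hB hb)).2⟩⟩
  · obtain ⟨A, hA, hAt⟩ := Finset.exists_subset_card_eq (show t ≤ #{x ∈ X | k ≤ x} by omega)
    obtain ⟨B, hB, hBs⟩ := Finset.exists_subset_card_eq (show s ≤ #{y ∈ Y | y < k} by omega)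
    exact ⟨A, hA.trans (X.filter_subset _), B, hB.trans (Y.filter_subset _),
      .inr ⟨hBs, hAt, fun b hb a ha ↦
        (Finset.mem_filter.1 (hB hb)).2.trans_le (Finset.mem_filter.1 (hA ha)).2⟩⟩

end Threshold

section Rotations

variable {V : Type*} {G : SimpleGraph V} {a b : V}

lemma exists_walks_support_eq_append (P : G.Walk a b) {i j : ℕ} (hij : i < j)
    (hj : j < P.length) :
    ∃ (A : G.Walk a (P.getVert i)) (B : G.Walk (P.getVert (i + 1)) (P.getVert j))
      (C : G.Walk (P.getVert (j + 1)) b), P.support = A.support ++ (B.support ++ C.support) := by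
  have hend : (P.drop (i + 1)).getVert (j - (i + 1)) = P.getVert j := by
    rw [Walk.drop_getVert, Nat.add_sub_cancel' hij]
  refine ⟨P.take i, ((P.drop (i + 1)).take (j - (i + 1))).copy rfl hend, P.drop (j + 1), ?_⟩
  rw [Walk.support_copy, Walk.support_take, Walk.support_take,
    Walk.drop_support_eq_support_drop_min, Walk.drop_support_eq_support_drop_min,
    min_eq_left (by omega), min_eq_left (by omega)]
  have hBC := List.take_append_drop (j - (i + 1) + 1) (P.support.drop (i + 1))
  rw [List.drop_drop, show i + 1 + (j - (i + 1) + 1) = j + 1 by omega] at hBC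
  rw [hBC, List.take_append_drop]

lemma exists_walk_support_perm_of_noncrossing_chords (P : G.Walk a b) {i j : ℕ} (hij : i < j)
    (hj : j < P.length) (ha : G.Adj a (P.getVert (i + 1))) (hb : G.Adj b (P.getVert j)) :
    ∃ Q : G.Walk (P.getVert i) (P.getVert (j + 1)), Q.support.Perm P.support := by
  obtain ⟨A, B, C, hABC⟩ := exists_walks_support_eq_append P hij hj
  refine ⟨A.reverse.append (.cons ha (B.append (.cons hb.symm C.reverse))), ?_⟩
  simpa [hABC, Walk.support_append] using
    (List.reverse_perm _).append ((List.Perm.refl _).append (List.reverse_perm _))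

lemma exists_walk_support_perm_of_crossing_chords (P : G.Walk a b) {i j : ℕ} (hij : i < j)
    (hj : j < P.length) (ha : G.Adj a (P.getVert j)) (hb : G.Adj b (P.getVert i)) :
    ∃ Q : G.Walk (P.getVert (i + 1)) (P.getVert (j + 1)), Q.support.Perm P.support := by
  obtain ⟨A, B, C, hABC⟩ := exists_walks_support_eq_append P hij hj
  refine ⟨B.append (.cons ha.symm (A.append (.cons hb.symm C.reverse))), ?_⟩
  rw [hABC]
  simpa [Walk.support_append] using
    (List.perm_append_comm_assoc _ _ _).trans (((List.reverse_perm _).append_left _).append_left _)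

end Rotations

section Degrees

variable {V : Type*} {G : SimpleGraph V} [DecidableRel G.Adj] {a b : V}

lemma degree_le_card_filter_of_surjOn {ι : Type*} {u : V} [Fintype (G.neighborSet u)]
    {I : Finset ι} {f : ι → V} (hf : Set.SurjOn f I (G.neighborSet u)) :
    G.degree u ≤ #{i ∈ I | G.Adj u (f i)} := by
  classical
  refine (Finset.card_le_card fun w hw ↦ ?_).trans (Finset.card_image_le (f := f))
  rw [mem_neighborFinset] at hw
  obtain ⟨i, hi, rfl⟩ := hf hw
  exact Finset.mem_image_of_mem f (Finset.mem_filter.2 ⟨hi, hw⟩)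

lemma degree_start_le_card_filter {P : G.Walk a b} [Fintype (G.neighborSet a)]
    (hP : G.neighborSet a ⊆ {x | x ∈ P.support}) :
    G.degree a ≤ #{i ∈ Finset.range P.length | G.Adj a (P.getVert (i + 1))} := by
  refine degree_le_card_filter_of_surjOn (f := fun i ↦ P.getVert (i + 1)) fun w hw ↦ ?_
  obtain ⟨i, rfl, hi⟩ := Walk.mem_support_iff_exists_getVert.1 (hP hw)
  rcases i with _ | i
  · exact absurd hw (by simp)
  · exact ⟨i, by simpa using hi, rfl⟩

lemma degree_end_le_card_filter {P : G.Walk a b} [Fintype (G.neighborSet b)]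
    (hP : G.neighborSet b ⊆ {x | x ∈ P.support}) :
    G.degree b ≤ #{i ∈ Finset.range P.length | G.Adj b (P.getVert i)} := by
  refine degree_le_card_filter_of_surjOn (f := P.getVert) fun w hw ↦ ?_
  obtain ⟨i, rfl, hi⟩ := Walk.mem_support_iff_exists_getVert.1 (hP hw)
  have hne : i ≠ P.length := by
    rintro rfl
    exact absurd hw (by simp)
  exact ⟨i, by simpa using hi.lt_of_ne hne, rfl⟩

end Degrees

section MaximumPaths

variable {V : Type*} {G : SimpleGraph V} {a b : V} {P : G.Walk a b}

lemma neighborSet_start_subset_support_of_forall_length_le (hP : P.IsPath)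
    (hmax : ∀ (c : V) (Q : G.Walk c b), Q.IsPath → Q.support.length ≤ P.support.length) :
    G.neighborSet a ⊆ {x | x ∈ P.support} := by
  intro w hw
  by_contra hmem
  simpa using hmax w (.cons hw.symm P) (hP.cons hmem)

lemma neighborSet_end_subset_support_of_forall_length_le (hP : P.IsPath)
    (hmax : ∀ (c : V) (Q : G.Walk a c), Q.IsPath → Q.support.length ≤ P.support.length) :
    G.neighborSet b ⊆ {x | x ∈ P.support} := by
  simpa using neighborSet_start_subset_support_of_forall_length_le hP.reverse
    fun c Q hQ ↦ by simpa using hmax c Q.reverse hQ.reverse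

end MaximumPaths

section HamiltonianPaths

variable {V : Type*} [DecidableEq V] {G : SimpleGraph V} {a b : V}

lemma isHamiltonian_of_isHamiltonian_walk_of_adj [Fintype V] {P : G.Walk a b}
    (hP : P.IsHamiltonian) (hab : G.Adj a b) (h3 : 3 ≤ Fintype.card V) : G.IsHamiltonian := by
  have htail : (Walk.cons hab.symm P).tail.IsHamiltonian := by
    simpa [Walk.IsHamiltonian] using hP
  have hlen : 3 ≤ (Walk.cons hab.symm P).length := by
    rw [Walk.length_cons, hP.length_eq]
    omega
  exact fun _ ↦ ⟨b, .cons hab.symm P,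
    Walk.isCycle_iff_isPath_tail_and_le_length.2 ⟨htail.isPath, hlen⟩, htail⟩

lemma isHamiltonian_induce_support {P : G.Walk a b} (hP : P.IsPath) :
    (P.induce {x | x ∈ P.support} fun _ hx ↦ hx).IsHamiltonian := by
  refine Walk.IsPath.isHamiltonian_of_mem
    (.of_map (f := (Embedding.induce _).toHom) ?_) fun w ↦ ?_
  · rwa [Walk.map_induce]
  · rw [Walk.support_induce]
    exact (List.mem_attachWith _ _).2 w.2

theorem isHamiltonian_of_isHamiltonian_walk_of_not_hasBipartiteHole [Fintype V]
    [DecidableRel G.Adj] {P : G.Walk a b} (hP : P.IsHamiltonian) (h3 : 3 ≤ Fintype.card V)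
    {s t : ℕ} (hs : 0 < s) (ht : 0 < t)
    (hst : ¬ G.HasBipartiteHole s t) (ha : s + t - 1 ≤ G.degree a) (hb : s + t - 1 ≤ G.degree b) :
    G.IsHamiltonian := by
  by_contra hG
  have hends {c d : V} (Q : G.Walk c d) (hQ : Q.support.Perm P.support) : ¬ G.Adj c d :=
    fun hcd ↦ hG <| isHamiltonian_of_isHamiltonian_walk_of_adj
      (P := Q) (fun v ↦ (hQ.count_eq v).trans (hP v)) hcd h3
  let X := {i ∈ Finset.range P.length | G.Adj a (P.getVert (i + 1))}
  let Y := {j ∈ Finset.range P.length | G.Adj b (P.getVert j)}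
  have hX : ∀ i ∈ X, i + 1 < P.length ∧ G.Adj a (P.getVert (i + 1)) := by
    intro i hi
    obtain ⟨hlt, hai⟩ : i < P.length ∧ G.Adj a (P.getVert (i + 1)) := by simpa [X] using hi
    refine ⟨(Nat.succ_le_of_lt hlt).lt_of_ne fun hend ↦ ?_, hai⟩
    exact hends P (.refl _) (P.getVert_length ▸ hend ▸ hai)
  have hY : ∀ j ∈ Y, j < P.length ∧ G.Adj b (P.getVert j) := by simp [Y]
  have hnoncrossing : ∀ i ∈ X, ∀ j ∈ Y, i < j → ¬ G.Adj (P.getVert i) (P.getVert (j + 1)) := by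
    intro i hi j hj hij
    obtain ⟨Q, hQ⟩ := exists_walk_support_perm_of_noncrossing_chords P hij
      (hY j hj).1 (hX i hi).2 (hY j hj).2
    exact hends Q hQ
  have hcrossing : ∀ j ∈ Y, ∀ i ∈ X, j ≤ i →
      ¬ G.Adj (P.getVert (j + 1)) (P.getVert (i + 2)) := by
    intro j hj i hi hji
    obtain ⟨Q, hQ⟩ := exists_walk_support_perm_of_crossing_chords P (Nat.lt_succ_of_le hji)
      (hX i hi).1 (hX i hi).2 (hY j hj).2
    exact hends Q hQ
  obtain ⟨J, hJ, I, hI, ⟨rfl, rfl, hle⟩ | ⟨rfl, rfl, hlt⟩⟩ := exists_subset_card_eq_le_or_lt hs ht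
    (hb.trans (degree_end_le_card_filter fun w _ ↦ hP.mem_support w) : _ ≤ #Y)
    (ha.trans (degree_start_le_card_filter fun w _ ↦ hP.mem_support w) : _ ≤ #X)
  · exact hst (hasBipartiteHole_card_of_getVert_add hP.isPath (m := 1) (n := 2)
      (fun j hj ↦ (hY j (hJ hj)).1) (fun i hi ↦ (hX i (hI hi)).1)
      (fun j hj i hi ↦ by have := hle j hj i hi; omega)
      fun j hj i hi ↦ hcrossing j (hJ hj) i (hI hi) (hle j hj i hi))
  · exact hst (hasBipartiteHole_card_of_getVert_add hP.isPath (m := 0) (n := 1)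
      (fun i hi ↦ by have := hX i (hI hi); omega) (fun j hj ↦ (hY j (hJ hj)).1)
      (fun i hi j hj ↦ by have := hlt i hi j hj; omega)
      fun i hi j hj ↦ hnoncrossing i (hI hi) j (hJ hj) (hlt i hi j hj))

end HamiltonianPaths

theorem induced_on_max_path_hamiltonian_general {V : Type*} [DecidableEq V] {G : SimpleGraph V}
    [DecidableRel G.Adj] {s t : ℕ} (hs : 0 < s) (ht : 0 < t) (hst : ¬ G.HasBipartiteHole s t)
    {a b : V} {P : G.Walk a b} [Fintype {x | x ∈ P.support}] (hP : P.IsPath)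
    (ha : s + t - 1 ≤ (G.induce {x | x ∈ P.support}).degree ⟨a, P.start_mem_support⟩)
    (hb : s + t - 1 ≤ (G.induce {x | x ∈ P.support}).degree ⟨b, P.end_mem_support⟩)
    (h3 : 3 ≤ P.support.length) : (G.induce {x | x ∈ P.support}).IsHamiltonian := by
  have hPS := isHamiltonian_induce_support hP
  have hcard := hPS.length_support
  rw [Walk.support_induce, List.length_attachWith] at hcard
  exact isHamiltonian_of_isHamiltonian_walk_of_not_hasBipartiteHole hPS (hcard ▸ h3) hs ht
    (fun h ↦ hst (hasBipartiteHole_of_embedding (Embedding.induce _) h)) ha hb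

/-- If `δ(G) ≥ α̃(G)` and `P` is a maximum-length path in `G` with at least 3 vertices,
then the induced subgraph of `G` on the vertex set of `P` is Hamiltonian. -/
theorem induced_on_max_path_hamiltonian
    {V : Type*} [Fintype V] [DecidableEq V] (G : SimpleGraph V) [DecidableRel G.Adj]
    (h : G.biHoleNumber ≤ G.minDegree)
    {a b : V} (P : G.Walk a b) (hP : P.IsPath)
    (hmax : ∀ (c d : V) (Q : G.Walk c d), Q.IsPath → Q.support.length ≤ P.support.length)
    (h3 : 3 ≤ P.support.length) :
    (G.induce {x | x ∈ P.support}).IsHamiltonian := by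
  obtain ⟨s, t, hs, ht, hr, hst⟩ := exists_biHoleNumber_eq_and_not_hasBipartiteHole G
  have ha := degree_induce_of_neighborSet_subset (v := ⟨a, P.start_mem_support⟩)
    (neighborSet_start_subset_support_of_forall_length_le hP fun c ↦ hmax c b)
  have hb := degree_induce_of_neighborSet_subset (v := ⟨b, P.end_mem_support⟩)
    (neighborSet_end_subset_support_of_forall_length_le hP fun c ↦ hmax a c)
  exact induced_on_max_path_hamiltonian_general hs ht hst hP
    (hr ▸ h.trans (ha ▸ G.minDegree_le_degree a)) (hr ▸ h.trans (hb ▸ G.minDegree_le_degree b)) h3
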